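/- arXiv:2305.19079 — 5 statements merged into one kernel-verified Lean document; each statement's English description precedes it below -/
import Mathlib

section
/- Let x and y be jointly distributed random vectors (the signal in ℝ^n and the measurement in ℝ^m), let e be a random vector in ℝ^n with E‖e‖₂² < ∞, and set y' = x + e. Let {f_θ : θ ∈ Θ} be a family of measurable maps f_θ : ℝ^m → ℝ^n with E‖f_θ(y)‖₂² < ∞ for all θ, and suppose that E[(f_θ(y) − x)ᵀ e] = 0 for all θ ∈ Θ. Then a parameter θ* ∈ Θ minimizes the self-supervised risk θ ↦ E‖f_θ(y) − y'‖₂² over Θ if and only if it minimizes the supervised risk θ ↦ E‖f_θ(y) − x‖₂² over Θ. -/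
open MeasureTheory ProbabilityTheory RealInnerProductSpace

/-!
Expanding the square around `f_θ(y) - x` gives
`E‖f_θ(y) - y'‖² = E‖f_θ(y) - x‖² - 2 Re E⟪f_θ(y) - x, e⟫ + E‖e‖²`. As soon as the cross term does
not depend on `θ`, the two risks differ by a constant, and hence have the same minimizers.
-/

section L2Expansion

variable {Ω 𝕜 E : Type*} [MeasurableSpace Ω] {μ : Measure Ω} [RCLike 𝕜]
  [NormedAddCommGroup E] [InnerProductSpace 𝕜 E]

theorem integrable_inner_of_memLp_two {u v : Ω → E} (hu : MemLp u 2 μ) (hv : MemLp v 2 μ) :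
    Integrable (fun ω => inner 𝕜 (u ω) (v ω)) μ := by
  refine memLp_one_iff_integrable.1 <| hu.of_bilin (inner 𝕜) 1 hv (hu.1.inner hv.1) ?_
  filter_upwards with ω
  simpa only [one_mul] using nnnorm_inner_le_nnnorm (u ω) (v ω)

variable (𝕜) in
theorem integral_norm_sub_sq {u v : Ω → E} (hu : MemLp u 2 μ) (hv : MemLp v 2 μ) :
    ∫ ω, ‖u ω - v ω‖ ^ 2 ∂μ =
      ∫ ω, ‖u ω‖ ^ 2 ∂μ - 2 * RCLike.re (∫ ω, inner 𝕜 (u ω) (v ω) ∂μ) + ∫ ω, ‖v ω‖ ^ 2 ∂μ := by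
  have hu_sq : Integrable (fun ω => ‖u ω‖ ^ 2) μ := hu.integrable_norm_pow two_ne_zero
  have hv_sq : Integrable (fun ω => ‖v ω‖ ^ 2) μ := hv.integrable_norm_pow two_ne_zero
  have h_inner : Integrable (fun ω => inner 𝕜 (u ω) (v ω)) μ := integrable_inner_of_memLp_two hu hv
  have h_cross : Integrable (fun ω => 2 * RCLike.re (inner 𝕜 (u ω) (v ω))) μ :=
    h_inner.re.const_mul 2
  calc ∫ ω, ‖u ω - v ω‖ ^ 2 ∂μ
      = ∫ ω, (‖u ω‖ ^ 2 - 2 * RCLike.re (inner 𝕜 (u ω) (v ω)) + ‖v ω‖ ^ 2) ∂μ := by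
        simp only [norm_sub_sq (𝕜 := 𝕜)]
    _ = ∫ ω, ‖u ω‖ ^ 2 ∂μ - 2 * RCLike.re (∫ ω, inner 𝕜 (u ω) (v ω) ∂μ)
          + ∫ ω, ‖v ω‖ ^ 2 ∂μ := by
        rw [integral_add (by fun_prop) hv_sq, integral_sub hu_sq h_cross,
          integral_const_mul, integral_re h_inner]

end L2Expansion

theorem stmt0_general {Ω 𝕜 E F Θ : Type*} [MeasurableSpace Ω] {μ : Measure Ω} [RCLike 𝕜]
    [NormedAddCommGroup E] [InnerProductSpace 𝕜 E] {x e : Ω → E} {y : Ω → F} {f : Θ → F → E}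
    (hres : ∀ θ, MemLp (fun ω => f θ (y ω) - x ω) 2 μ) (he : MemLp e 2 μ) {c : ℝ}
    (hcross : ∀ θ, RCLike.re (∫ ω, inner 𝕜 (f θ (y ω) - x ω) (e ω) ∂μ) = c) (θstar : Θ) :
    (∀ θ, ∫ ω, ‖f θstar (y ω) - (x ω + e ω)‖ ^ 2 ∂μ ≤ ∫ ω, ‖f θ (y ω) - (x ω + e ω)‖ ^ 2 ∂μ) ↔
      ∀ θ, ∫ ω, ‖f θstar (y ω) - x ω‖ ^ 2 ∂μ ≤ ∫ ω, ‖f θ (y ω) - x ω‖ ^ 2 ∂μ := by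
  have risk_eq (θ : Θ) : ∫ ω, ‖f θ (y ω) - (x ω + e ω)‖ ^ 2 ∂μ =
      ∫ ω, ‖f θ (y ω) - x ω‖ ^ 2 ∂μ - 2 * c + ∫ ω, ‖e ω‖ ^ 2 ∂μ := by
    simp only [← sub_sub]
    rw [integral_norm_sub_sq 𝕜 (hres θ) he, hcross θ]
  simp only [risk_eq, add_le_add_iff_right, sub_le_sub_iff_right]

/-- Noise2noise: under the orthogonality condition
`E[(f_θ(y) - x)ᵀ e] = 0` for all `θ`, a parameter `θ*` minimizes the
self-supervised risk `θ ↦ E‖f_θ(y) - y'‖₂²` (with `y' = x + e`) over `Θ`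
if and only if it minimizes the supervised risk `θ ↦ E‖f_θ(y) - x‖₂²` over `Θ`. -/
theorem stmt0 (n m : ℕ) {Ω : Type*} [MeasurableSpace Ω]
    (μ : Measure Ω) [IsProbabilityMeasure μ]
    (x e : Ω → EuclideanSpace ℝ (Fin n)) (y : Ω → EuclideanSpace ℝ (Fin m))
    (hx : Measurable x) (hy : Measurable y) (he : Measurable e)
    (hx2 : Integrable (fun ω => ‖x ω‖ ^ 2) μ)
    (he2 : Integrable (fun ω => ‖e ω‖ ^ 2) μ)
    {Θ : Type*} (f : Θ → EuclideanSpace ℝ (Fin m) → EuclideanSpace ℝ (Fin n))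
    (hfmeas : ∀ θ, Measurable (f θ))
    (hf2 : ∀ θ, Integrable (fun ω => ‖f θ (y ω)‖ ^ 2) μ)
    (horth : ∀ θ, ∫ ω, ⟪f θ (y ω) - x ω, e ω⟫ ∂μ = 0)
    (θstar : Θ) :
    (∀ θ, ∫ ω, ‖f θstar (y ω) - (x ω + e ω)‖ ^ 2 ∂μ ≤
        ∫ ω, ‖f θ (y ω) - (x ω + e ω)‖ ^ 2 ∂μ)
    ↔
    (∀ θ, ∫ ω, ‖f θstar (y ω) - x ω‖ ^ 2 ∂μ ≤
        ∫ ω, ‖f θ (y ω) - x ω‖ ^ 2 ∂μ) := by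
  have memLp_two {g : Ω → EuclideanSpace ℝ (Fin n)} (hg : Measurable g) :
      Integrable (fun ω => ‖g ω‖ ^ 2) μ → MemLp g 2 μ :=
    (memLp_two_iff_integrable_sq_norm hg.aestronglyMeasurable).2
  exact stmt0_general (𝕜 := ℝ)
    (fun θ => (memLp_two ((hfmeas θ).comp hy) (hf2 θ)).sub (memLp_two hx hx2))
    (memLp_two he he2) horth θstar
end

section
/- Let x ∈ ℂ^n and y ∈ ℂ^m be jointly distributed random vectors with E‖x‖₂² < ∞, let F ∈ ℂ^{n×n} be a unitary matrix, and let M' = diag(m₁, …, m_n) be a random diagonal matrix, independent of (x, y), whose diagonal entries take values in {0, 1} with p_j = P(m_j = 1) > 0 for every j. Set W = diag(p₁^{−1/2}, …, p_n^{−1/2}) = (E[M'])^{−1/2} and y' = M' F x. Then for every measurable map f : ℂ^m → ℂ^n with E‖f(y)‖₂² < ∞, the self-supervised risk E‖W(M' F f(y) − y')‖₂² equals the supervised risk E‖f(y) − x‖₂²; in particular, for any family {f_θ : θ ∈ Θ}, a parameter θ minimizes the self-supervised risk over Θ if and only if it minimizes the supervised risk over Θ. -/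
open MeasureTheory ProbabilityTheory Matrix

/-- Supervised risk `E‖f(y) - x‖₂²` for complex-valued signals. -/
noncomputable def supRiskCS (n m : ℕ) {Ω : Type*} [MeasurableSpace Ω] (μ : Measure Ω)
    (x : Ω → Fin n → ℂ) (y : Ω → Fin m → ℂ)
    (f : (Fin m → ℂ) → Fin n → ℂ) : ℝ :=
  ∫ ω, ∑ j, ‖f (y ω) j - x ω j‖ ^ 2 ∂μ

/-- Self-supervised risk `E‖W (M' F f(y) - y')‖₂²` where `y' = M' F x`,
`M' = diag(msk)` is the random 0/1 mask and `W = diag(p_j^{-1/2}) = (E[M'])^{-1/2}`. -/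
noncomputable def ssRiskCS (n m : ℕ) {Ω : Type*} [MeasurableSpace Ω] (μ : Measure Ω)
    (x : Ω → Fin n → ℂ) (y : Ω → Fin m → ℂ) (msk : Ω → Fin n → ℝ)
    (F : Matrix (Fin n) (Fin n) ℂ) (p : Fin n → ℝ)
    (f : (Fin m → ℂ) → Fin n → ℂ) : ℝ :=
  ∫ ω, ∑ j, ‖((Real.sqrt (p j) : ℂ))⁻¹ *
      ((msk ω j : ℂ) * F.mulVec (f (y ω)) j - (msk ω j : ℂ) * F.mulVec (x ω) j)‖ ^ 2 ∂μ

/-!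
Write `r = F (f(y) - x)` for the residual in the frequency domain. The self-supervised risk is the
sum over `j` of `p_j⁻¹ E[|m_j|² |r_j|²]`. Since the mask is independent of `r`, each expectation
factors as `E|m_j|² E|r_j|² = p_j E|r_j|²`, so the weight cancels the sampling density exactly and
`E‖r‖₂²` remains. As `F` is an isometry, this is the supervised risk.
-/

/-- The mean squared Euclidean norm `E‖v‖₂²` of a random vector, taken as a Lebesgue integral
with values in `[0, ∞]`, so that an infinite risk is `∞` instead of the Bochner junk value `0`.
The coordinates are summed explicitly because the norm of a function type is the sup norm. -/
noncomputable def meanSqNorm {Ω ι E : Type*} [MeasurableSpace Ω] [Fintype ι] [ENorm E]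
    (μ : Measure Ω) (v : Ω → ι → E) : ENNReal :=
  ∫⁻ ω, ∑ j, ‖v ω j‖ₑ ^ 2 ∂μ

section Deterministic

variable {𝕜 ι κ : Type*} [RCLike 𝕜] [Fintype ι]

theorem ennreal_ofReal_sum_norm_sq {E : Type*} [SeminormedAddCommGroup E] (v : ι → E) :
    ENNReal.ofReal (∑ i, ‖v i‖ ^ 2) = ∑ i, ‖v i‖ₑ ^ 2 := by
  rw [ENNReal.ofReal_sum_of_nonneg fun i _ => sq_nonneg ‖v i‖]
  simp only [ENNReal.ofReal_pow (norm_nonneg _), ofReal_norm]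

theorem coe_sum_norm_sq_eq_star_dotProduct_self (v : ι → 𝕜) :
    ((∑ i, ‖v i‖ ^ 2 : ℝ) : 𝕜) = star v ⬝ᵥ v := by
  simp [dotProduct, RCLike.conj_mul]

theorem sum_norm_sq_mulVec_of_conjTranspose_mul_self [Fintype κ] [DecidableEq ι]
    {F : Matrix κ ι 𝕜} (hF : Fᴴ * F = 1) (v : ι → 𝕜) :
    ∑ j, ‖(F *ᵥ v) j‖ ^ 2 = ∑ i, ‖v i‖ ^ 2 := by
  have star_dotProduct_self : star (F *ᵥ v) ⬝ᵥ (F *ᵥ v) = star v ⬝ᵥ v := by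
    rw [star_mulVec, ← dotProduct_mulVec, mulVec_mulVec, hF, one_mulVec]
  rw [← coe_sum_norm_sq_eq_star_dotProduct_self,
    ← coe_sum_norm_sq_eq_star_dotProduct_self] at star_dotProduct_self
  exact_mod_cast star_dotProduct_self

theorem measurable_mulVec (F : Matrix κ ι 𝕜) : Measurable fun v : ι → 𝕜 => F *ᵥ v :=
  measurable_pi_lambda _ fun j => by
    simp only [mulVec, dotProduct]
    fun_prop

theorem enorm_inv_sqrt_sq {p : ℝ} (hp : 0 < p) :
    ‖((√p : ℝ) : 𝕜)⁻¹‖ₑ ^ 2 = (ENNReal.ofReal p)⁻¹ := by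
  rw [← ofReal_norm, ← ENNReal.ofReal_pow (norm_nonneg _), norm_inv, inv_pow,
    RCLike.norm_ofReal, sq_abs, Real.sq_sqrt hp.le, ENNReal.ofReal_inv_of_pos hp]

end Deterministic

section Random

variable {Ω 𝕜 ι κ : Type*} [MeasurableSpace Ω] {μ : Measure Ω} [RCLike 𝕜] [Fintype ι] [Fintype κ]

theorem integral_sum_norm_sq_eq_toReal_meanSqNorm {E : Type*} [NormedAddCommGroup E]
    [MeasurableSpace E] [OpensMeasurableSpace E] {v : Ω → ι → E} (hv : AEMeasurable v μ) :
    ∫ ω, ∑ j, ‖v ω j‖ ^ 2 ∂μ = (meanSqNorm μ v).toReal := by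
  have hsum : AEMeasurable (fun ω => ∑ j, ‖v ω j‖ ^ 2) μ := by fun_prop
  rw [integral_eq_lintegral_of_nonneg_ae (.of_forall fun ω => by positivity)
    hsum.aestronglyMeasurable]
  simp only [ennreal_ofReal_sum_norm_sq, meanSqNorm]

theorem meanSqNorm_mulVec_of_conjTranspose_mul_self [DecidableEq ι] {F : Matrix κ ι 𝕜}
    (hF : Fᴴ * F = 1) (v : Ω → ι → 𝕜) :
    meanSqNorm μ (fun ω => F *ᵥ v ω) = meanSqNorm μ v := by
  simp only [meanSqNorm, ← ennreal_ofReal_sum_norm_sq,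
    sum_norm_sq_mulVec_of_conjTranspose_mul_self hF]

theorem lintegral_enorm_sq_inv_sqrt_mul_mul {a b : Ω → 𝕜} (ha : AEMeasurable a μ)
    (hb : AEMeasurable b μ) (hab : IndepFun a b μ) {p : ℝ} (hp : 0 < p)
    (ha2 : ∫⁻ ω, ‖a ω‖ₑ ^ 2 ∂μ = ENNReal.ofReal p) :
    ∫⁻ ω, ‖((√p : ℝ) : 𝕜)⁻¹ * (a ω * b ω)‖ₑ ^ 2 ∂μ = ∫⁻ ω, ‖b ω‖ₑ ^ 2 ∂μ := by
  have hsq : Measurable fun z : 𝕜 => ‖z‖ₑ ^ 2 := by fun_prop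
  calc ∫⁻ ω, ‖((√p : ℝ) : 𝕜)⁻¹ * (a ω * b ω)‖ₑ ^ 2 ∂μ
      = (ENNReal.ofReal p)⁻¹ * ∫⁻ ω, ‖a ω‖ₑ ^ 2 * ‖b ω‖ₑ ^ 2 ∂μ := by
        simp only [enorm_mul, mul_pow, enorm_inv_sqrt_sq hp]
        exact lintegral_const_mul'' _ (by fun_prop)
    _ = (ENNReal.ofReal p)⁻¹ * (ENNReal.ofReal p * ∫⁻ ω, ‖b ω‖ₑ ^ 2 ∂μ) := by
        rw [← ha2]
        congr 1
        exact lintegral_mul_eq_lintegral_mul_lintegral_of_indepFun''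
          (by fun_prop) (by fun_prop) (hab.comp hsq hsq)
    _ = ∫⁻ ω, ‖b ω‖ₑ ^ 2 ∂μ :=
        ENNReal.inv_mul_cancel_left (by simpa using hp) ENNReal.ofReal_ne_top

theorem meanSqNorm_inv_sqrt_mul_mul {msk v : Ω → κ → 𝕜} (hmsk : AEMeasurable msk μ)
    (hv : AEMeasurable v μ) (hindep : ∀ j, IndepFun (msk · j) (v · j) μ)
    {p : κ → ℝ} (hp : ∀ j, 0 < p j)
    (hmsk2 : ∀ j, ∫⁻ ω, ‖msk ω j‖ₑ ^ 2 ∂μ = ENNReal.ofReal (p j)) :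
    meanSqNorm μ (fun ω j => ((√(p j) : ℝ) : 𝕜)⁻¹ * (msk ω j * v ω j)) = meanSqNorm μ v := by
  unfold meanSqNorm
  rw [lintegral_finsetSum' _ fun j _ => by fun_prop, lintegral_finsetSum' _ fun j _ => by fun_prop]
  exact Finset.sum_congr rfl fun j _ =>
    lintegral_enorm_sq_inv_sqrt_mul_mul (by fun_prop) (by fun_prop) (hindep j) (hp j) (hmsk2 j)

theorem lintegral_enorm_sq_of_eq_zero_or_one {R : Type*} [NormedRing R] [NormOneClass R]
    [MeasurableSpace R] [MeasurableSingletonClass R] {a : Ω → R} (ha : AEMeasurable a μ)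
    (h01 : ∀ ω, a ω = 0 ∨ a ω = 1) :
    ∫⁻ ω, ‖a ω‖ₑ ^ 2 ∂μ = μ {ω | a ω = 1} := by
  have : Nontrivial R := NormOneClass.nontrivial
  have henorm : (fun ω => ‖a ω‖ₑ ^ 2) = {ω | a ω = 1}.indicator 1 := by
    funext ω
    rcases h01 ω with h | h <;> simp [h]
  rw [henorm]
  exact lintegral_indicator_one₀ (ha.nullMeasurableSet_preimage (measurableSet_singleton 1))

end Random

section Risk

variable {n m : ℕ} {Ω : Type*} [MeasurableSpace Ω] {μ : Measure Ω}
  {x : Ω → Fin n → ℂ} {y : Ω → Fin m → ℂ} {f : (Fin m → ℂ) → Fin n → ℂ}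

theorem supRiskCS_eq_toReal_meanSqNorm (hx : AEMeasurable x μ) (hy : AEMeasurable y μ)
    (hf : Measurable f) :
    supRiskCS n m μ x y f = (meanSqNorm μ fun ω => f (y ω) - x ω).toReal :=
  integral_sum_norm_sq_eq_toReal_meanSqNorm ((hf.comp_aemeasurable hy).sub hx)

theorem ssRiskCS_eq_toReal_meanSqNorm (hx : AEMeasurable x μ) (hy : AEMeasurable y μ)
    {msk : Ω → Fin n → ℝ} (hmsk : AEMeasurable msk μ) (F : Matrix (Fin n) (Fin n) ℂ)
    (p : Fin n → ℝ) (hf : Measurable f) :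
    ssRiskCS n m μ x y msk F p f = (meanSqNorm μ fun ω j => (√(p j) : ℂ)⁻¹ *
      ((msk ω j : ℂ) * (F *ᵥ f (y ω)) j - (msk ω j : ℂ) * (F *ᵥ x ω) j)).toReal := by
  have hF := measurable_mulVec F
  exact integral_sum_norm_sq_eq_toReal_meanSqNorm (by fun_prop)

end Risk

theorem stmt2_general {Ω 𝕜 ι κ 𝒴 : Type*} [MeasurableSpace Ω] {μ : Measure Ω} [RCLike 𝕜]
    [Fintype ι] [DecidableEq ι] [Fintype κ] [MeasurableSpace 𝒴]
    {x : Ω → ι → 𝕜} (hx : AEMeasurable x μ) {y : Ω → 𝒴} (hy : AEMeasurable y μ)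
    {F : Matrix κ ι 𝕜} (hF : Fᴴ * F = 1)
    {msk : Ω → κ → 𝕜} (hmsk : AEMeasurable msk μ)
    (hindep : IndepFun msk (fun ω => (x ω, y ω)) μ)
    {p : κ → ℝ} (hp : ∀ j, 0 < p j)
    (hmsk2 : ∀ j, ∫⁻ ω, ‖msk ω j‖ₑ ^ 2 ∂μ = ENNReal.ofReal (p j))
    {f : 𝒴 → ι → 𝕜} (hf : Measurable f) :
    meanSqNorm μ (fun ω j => ((√(p j) : ℝ) : 𝕜)⁻¹ *
        (msk ω j * (F *ᵥ f (y ω)) j - msk ω j * (F *ᵥ x ω) j)) =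
      meanSqNorm μ (fun ω => f (y ω) - x ω) := by
  have hresidual : Measurable fun z : (ι → 𝕜) × 𝒴 => F *ᵥ (f z.2 - z.1) :=
    (measurable_mulVec F).comp (by fun_prop)
  have hresidual_comp : AEMeasurable (fun ω => F *ᵥ (f (y ω) - x ω)) μ :=
    hresidual.comp_aemeasurable (hx.prodMk hy)
  have hindep_residual (j : κ) :
      IndepFun (msk · j) (fun ω => (F *ᵥ (f (y ω) - x ω)) j) μ :=
    hindep.comp (measurable_pi_apply j) ((measurable_pi_apply j).comp hresidual)
  simp only [← mul_sub, ← Pi.sub_apply, ← mulVec_sub]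
  rw [meanSqNorm_inv_sqrt_mul_mul hmsk hresidual_comp hindep_residual hp hmsk2,
    meanSqNorm_mulVec_of_conjTranspose_mul_self hF]

/-- Self-supervised compressive sensing: with `F` unitary,
`M'` a random diagonal 0/1 mask independent of `(x, y)` selecting each entry with
probability `p j > 0`, `W = (E[M'])^{-1/2}` and `y' = M' F x`, the self-supervised
risk `E‖W(M' F f(y) - y')‖₂²` equals the supervised risk `E‖f(y) - x‖₂²` for every
measurable `f` with `E‖f(y)‖₂² < ∞`; in particular, for any family `{f_θ}`, a
parameter minimizes the self-supervised risk iff it minimizes the supervised risk. -/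
theorem stmt2 (n m : ℕ) {Ω : Type*} [MeasurableSpace Ω]
    (μ : Measure Ω) [IsProbabilityMeasure μ]
    (x : Ω → Fin n → ℂ) (y : Ω → Fin m → ℂ)
    (hxmeas : Measurable x) (hymeas : Measurable y)
    (hx2 : Integrable (fun ω => ∑ j, ‖x ω j‖ ^ 2) μ)
    (F : Matrix (Fin n) (Fin n) ℂ) (hF : F ∈ Matrix.unitaryGroup (Fin n) ℂ)
    (msk : Ω → Fin n → ℝ) (hmskmeas : Measurable msk)
    (h01 : ∀ ω j, msk ω j = 0 ∨ msk ω j = 1)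
    (hindep : IndepFun msk (fun ω => (x ω, y ω)) μ)
    (p : Fin n → ℝ) (hp : ∀ j, p j = (μ {ω | msk ω j = 1}).toReal)
    (hppos : ∀ j, 0 < p j)
    {Θ : Type*} (fam : Θ → (Fin m → ℂ) → Fin n → ℂ)
    (hfammeas : ∀ θ, Measurable (fam θ))
    (hfam2 : ∀ θ, Integrable (fun ω => ∑ j, ‖fam θ (y ω) j‖ ^ 2) μ) :
    (∀ f : (Fin m → ℂ) → Fin n → ℂ, Measurable f →
      Integrable (fun ω => ∑ j, ‖f (y ω) j‖ ^ 2) μ →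
      ssRiskCS n m μ x y msk F p f = supRiskCS n m μ x y f) ∧
    (∀ θstar : Θ,
      (∀ θ, ssRiskCS n m μ x y msk F p (fam θstar) ≤ ssRiskCS n m μ x y msk F p (fam θ)) ↔
      (∀ θ, supRiskCS n m μ x y (fam θstar) ≤ supRiskCS n m μ x y (fam θ))) := by
  have hmsk2 (j : Fin n) : ∫⁻ ω, ‖(msk ω j : ℂ)‖ₑ ^ 2 ∂μ = ENNReal.ofReal (p j) := by
    rw [lintegral_enorm_sq_of_eq_zero_or_one (by fun_prop) fun ω => by exact_mod_cast h01 ω j, hp,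
      ENNReal.ofReal_toReal (measure_ne_top _ _)]
    norm_cast
  have hindep_msk : IndepFun (fun ω j => (msk ω j : ℂ)) (fun ω => (x ω, y ω)) μ :=
    hindep.comp (φ := fun v j => (v j : ℂ)) (by fun_prop) measurable_id
  have hrisk (f : (Fin m → ℂ) → Fin n → ℂ) (hf : Measurable f) :
      ssRiskCS n m μ x y msk F p f = supRiskCS n m μ x y f := by
    have hx := hxmeas.aemeasurable (μ := μ)
    have hy := hymeas.aemeasurable (μ := μ)
    rw [ssRiskCS_eq_toReal_meanSqNorm hx hy hmskmeas.aemeasurable F p hf,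
      supRiskCS_eq_toReal_meanSqNorm hx hy hf]
    exact congrArg ENNReal.toReal <| stmt2_general hx hy (mem_unitaryGroup_iff'.1 hF)
      (by fun_prop) hindep_msk hppos hmsk2 hf
  exact ⟨fun f hf _ => hrisk f hf, fun θstar => by simp only [hrisk _ (hfammeas _)]⟩
end

section
/- Consider the linear subspace denoising model. The matrix W* = (1/(1 + σ_z² d/n)) U Uᵀ minimizes the risk R over all W ∈ ℝ^{n×n}, i.e., R(W*) ≤ R(W) for all W ∈ ℝ^{n×n}, and the optimal risk equals R(W*) = (σ_z² d/n)/(1 + σ_z² d/n). -/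
open MeasureTheory ProbabilityTheory Matrix

/-- The risk `R(W) = E‖W y - x‖₂²` of the linear estimator `W` in the linear
subspace denoising model, where `x = U c` and `y = x + z`. -/
noncomputable def riskLin (n d : ℕ) {Ω : Type*} [MeasurableSpace Ω] (μ : Measure Ω)
    (U : Matrix (Fin n) (Fin d) ℝ) (c : Ω → Fin d → ℝ) (z : Ω → Fin n → ℝ)
    (W : Matrix (Fin n) (Fin n) ℝ) : ℝ :=
  ∫ ω, ∑ i, ((W.mulVec (U.mulVec (c ω) + z ω) - U.mulVec (c ω)) i) ^ 2 ∂μ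

/-!
A linear estimator `W₀ y` of `x` whose error `W₀ y - x` is orthogonal to `y`, that is,
`W₀ E[y yᵀ] = E[x yᵀ]`, is optimal: by Pythagoras, replacing `W₀` by `W` adds
`E‖(W - W₀) y‖²` to the mean squared error. In the subspace model `E[y yᵀ] = v U Uᵀ + w I` and
`E[x yᵀ] = v U Uᵀ` with `v = 1 / d` and `w = σ_z² / n`. As `U Uᵀ` is a projection,
`W₀ = s U Uᵀ` solves these normal equations as soon as `s (v + w) = v`. Only the second moments
of `c` and `z` enter.
-/

section CrossMoment

variable {Ω ι κ τ : Type*} [MeasurableSpace Ω] {μ : Measure Ω}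

/-- The second moment matrix `E[X Yᵀ]` of two random vectors, without centering; an entry
whose product is not integrable is `0`. -/
noncomputable def crossMoment (μ : Measure Ω) (X : Ω → ι → ℝ) (Y : Ω → κ → ℝ) : Matrix ι κ ℝ :=
  Matrix.of fun i j => ∫ ω, X ω i * Y ω j ∂μ

lemma crossMoment_apply (X : Ω → ι → ℝ) (Y : Ω → κ → ℝ) (i : ι) (j : κ) :
    crossMoment μ X Y i j = ∫ ω, X ω i * Y ω j ∂μ := rfl

lemma transpose_crossMoment (X : Ω → ι → ℝ) (Y : Ω → κ → ℝ) :
    (crossMoment μ X Y)ᵀ = crossMoment μ Y X := by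
  ext i j
  simp only [transpose_apply, crossMoment_apply, mul_comm]

variable [Fintype ι] [Fintype κ] {X X' : Ω → ι → ℝ} {Y Y' : Ω → κ → ℝ}

lemma integrable_apply_mul_apply (hX : MemLp X 2 μ) (hY : MemLp Y 2 μ) (i : ι) (j : κ) :
    Integrable (fun ω => X ω i * Y ω j) μ :=
  (hX.eval i).integrable_mul (hY.eval j)

lemma memLp_mulVec {p : ENNReal} (A : Matrix κ ι ℝ) (hX : MemLp X p μ) :
    MemLp (fun ω => A *ᵥ X ω) p μ :=
  A.mulVecLin.toContinuousLinearMap.comp_memLp' hX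

lemma crossMoment_add_left (hX : MemLp X 2 μ) (hX' : MemLp X' 2 μ) (hY : MemLp Y 2 μ) :
    crossMoment μ (fun ω => X ω + X' ω) Y = crossMoment μ X Y + crossMoment μ X' Y := by
  ext i j
  simp only [Matrix.add_apply, crossMoment_apply, Pi.add_apply, add_mul]
  exact integral_add (integrable_apply_mul_apply hX hY i j) (integrable_apply_mul_apply hX' hY i j)

lemma crossMoment_add_right (hX : MemLp X 2 μ) (hY : MemLp Y 2 μ) (hY' : MemLp Y' 2 μ) :
    crossMoment μ X (fun ω => Y ω + Y' ω) = crossMoment μ X Y + crossMoment μ X Y' := by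
  rw [← transpose_crossMoment, crossMoment_add_left hY hY' hX, transpose_add,
    transpose_crossMoment, transpose_crossMoment]

lemma crossMoment_sub_left (hX : MemLp X 2 μ) (hX' : MemLp X' 2 μ) (hY : MemLp Y 2 μ) :
    crossMoment μ (fun ω => X ω - X' ω) Y = crossMoment μ X Y - crossMoment μ X' Y := by
  ext i j
  simp only [Matrix.sub_apply, crossMoment_apply, Pi.sub_apply, sub_mul]
  exact integral_sub (integrable_apply_mul_apply hX hY i j) (integrable_apply_mul_apply hX' hY i j)

lemma crossMoment_sub_right (hX : MemLp X 2 μ) (hY : MemLp Y 2 μ) (hY' : MemLp Y' 2 μ) :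
    crossMoment μ X (fun ω => Y ω - Y' ω) = crossMoment μ X Y - crossMoment μ X Y' := by
  rw [← transpose_crossMoment, crossMoment_sub_left hY hY' hX, transpose_sub,
    transpose_crossMoment, transpose_crossMoment]

lemma crossMoment_mulVec_left (A : Matrix τ ι ℝ) (hX : MemLp X 2 μ) (hY : MemLp Y 2 μ) :
    crossMoment μ (fun ω => A *ᵥ X ω) Y = A * crossMoment μ X Y := by
  ext i j
  simp only [crossMoment_apply, mul_apply, mulVec, dotProduct, Finset.sum_mul, mul_assoc]
  rw [integral_finsetSum _ fun k _ => (integrable_apply_mul_apply hX hY k j).const_mul (A i k)]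
  simp only [integral_const_mul]

lemma crossMoment_mulVec_right (A : Matrix τ κ ℝ) (hX : MemLp X 2 μ) (hY : MemLp Y 2 μ) :
    crossMoment μ X (fun ω => A *ᵥ Y ω) = crossMoment μ X Y * Aᵀ := by
  rw [← transpose_crossMoment, crossMoment_mulVec_left A hY hX, transpose_mul,
    transpose_crossMoment]

lemma integral_sum_sq_eq_trace_crossMoment (hX : MemLp X 2 μ) :
    ∫ ω, ∑ i, X ω i ^ 2 ∂μ = (crossMoment μ X X).trace := by
  rw [integral_finsetSum _ fun i _ => (hX.eval i).integrable_sq]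
  simp only [trace, diag_apply, crossMoment_apply, sq]

lemma integral_sum_sq_add_of_crossMoment_eq_zero (hX : MemLp X 2 μ) (hX' : MemLp X' 2 μ)
    (horth : crossMoment μ X X' = 0) :
    ∫ ω, ∑ i, (X ω + X' ω) i ^ 2 ∂μ = ∫ ω, ∑ i, X ω i ^ 2 ∂μ + ∫ ω, ∑ i, X' ω i ^ 2 ∂μ := by
  have hadd : MemLp (fun ω => X ω + X' ω) 2 μ := hX.add hX'
  have horth' : crossMoment μ X' X = 0 := by
    rw [← transpose_crossMoment, horth, transpose_zero]
  rw [integral_sum_sq_eq_trace_crossMoment hadd, integral_sum_sq_eq_trace_crossMoment hX,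
    integral_sum_sq_eq_trace_crossMoment hX', crossMoment_add_left hX hX' hadd,
    crossMoment_add_right hX hX hX', crossMoment_add_right hX' hX hX', horth, horth', add_zero,
    zero_add, trace_add]

end CrossMoment

section MeanSqError

variable {Ω ι κ : Type*} [MeasurableSpace Ω] {μ : Measure Ω} [Fintype ι] [Fintype κ]
  {x : Ω → ι → ℝ} {y : Ω → κ → ℝ} {W₀ : Matrix ι κ ℝ}

/-- The mean squared error `E‖W y - x‖₂²` of the linear estimator `W y` of `x`. -/
noncomputable def meanSqError (μ : Measure Ω) (x : Ω → ι → ℝ) (y : Ω → κ → ℝ)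
    (W : Matrix ι κ ℝ) : ℝ :=
  ∫ ω, ∑ i, (W *ᵥ y ω - x ω) i ^ 2 ∂μ

lemma crossMoment_error_eq_zero (hx : MemLp x 2 μ) (hy : MemLp y 2 μ)
    (hW₀ : W₀ * crossMoment μ y y = crossMoment μ x y) :
    crossMoment μ (fun ω => W₀ *ᵥ y ω - x ω) y = 0 := by
  rw [crossMoment_sub_left (memLp_mulVec W₀ hy) hx hy, crossMoment_mulVec_left W₀ hy hy, hW₀,
    sub_self]

theorem meanSqError_eq_add_of_normal_equation (hx : MemLp x 2 μ) (hy : MemLp y 2 μ)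
    (hW₀ : W₀ * crossMoment μ y y = crossMoment μ x y) (W : Matrix ι κ ℝ) :
    meanSqError μ x y W =
      meanSqError μ x y W₀ + ∫ ω, ∑ i, ((W - W₀) *ᵥ y ω) i ^ 2 ∂μ := by
  have herror : MemLp (fun ω => W₀ *ᵥ y ω - x ω) 2 μ := (memLp_mulVec W₀ hy).sub hx
  have horth : crossMoment μ (fun ω => W₀ *ᵥ y ω - x ω) (fun ω => (W - W₀) *ᵥ y ω) = 0 := by
    rw [crossMoment_mulVec_right _ herror hy, crossMoment_error_eq_zero hx hy hW₀, Matrix.zero_mul]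
  have hsplit (ω : Ω) : W *ᵥ y ω - x ω = (W₀ *ᵥ y ω - x ω) + (W - W₀) *ᵥ y ω := by
    rw [sub_mulVec]
    abel
  simp only [meanSqError, hsplit]
  exact integral_sum_sq_add_of_crossMoment_eq_zero herror (memLp_mulVec _ hy) horth

theorem meanSqError_le_of_normal_equation (hx : MemLp x 2 μ) (hy : MemLp y 2 μ)
    (hW₀ : W₀ * crossMoment μ y y = crossMoment μ x y) (W : Matrix ι κ ℝ) :
    meanSqError μ x y W₀ ≤ meanSqError μ x y W := by
  rw [meanSqError_eq_add_of_normal_equation hx hy hW₀ W]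
  exact le_add_of_nonneg_right (integral_nonneg fun ω => Finset.sum_nonneg fun i _ => sq_nonneg _)

theorem meanSqError_eq_trace_of_normal_equation (hx : MemLp x 2 μ) (hy : MemLp y 2 μ)
    (hW₀ : W₀ * crossMoment μ y y = crossMoment μ x y) :
    meanSqError μ x y W₀ = (crossMoment μ x x - W₀ * crossMoment μ y x).trace := by
  have herror : MemLp (fun ω => W₀ *ᵥ y ω - x ω) 2 μ := (memLp_mulVec W₀ hy).sub hx
  rw [meanSqError, integral_sum_sq_eq_trace_crossMoment herror,
    crossMoment_sub_right herror (memLp_mulVec W₀ hy) hx, crossMoment_mulVec_right W₀ herror hy,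
    crossMoment_error_eq_zero hx hy hW₀, Matrix.zero_mul, zero_sub,
    crossMoment_sub_left (memLp_mulVec W₀ hy) hx hx, crossMoment_mulVec_left W₀ hy hx, neg_sub]

end MeanSqError

section OrthonormalColumns

variable {ι κ R : Type*} [Fintype ι] [Fintype κ] [DecidableEq κ] [CommSemiring R]
  {U : Matrix ι κ R}

lemma isIdempotentElem_mul_transpose (hU : Uᵀ * U = 1) : IsIdempotentElem (U * Uᵀ) := by
  rw [IsIdempotentElem, Matrix.mul_assoc, ← Matrix.mul_assoc Uᵀ, hU, Matrix.one_mul]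

lemma trace_mul_transpose_eq_card (hU : Uᵀ * U = 1) : (U * Uᵀ).trace = Fintype.card κ := by
  rw [trace_mul_comm, hU, trace_one]

end OrthonormalColumns

section SubspaceModel

variable {Ω ι κ : Type*} [MeasurableSpace Ω] {μ : Measure Ω} [Fintype ι] [Fintype κ]
  [DecidableEq κ] {U : Matrix ι κ ℝ} {c : Ω → κ → ℝ} {z : Ω → ι → ℝ} {v w s : ℝ}

lemma crossMoment_signal_signal (hc : MemLp c 2 μ) (hcc : crossMoment μ c c = v • 1) :
    crossMoment μ (fun ω => U *ᵥ c ω) (fun ω => U *ᵥ c ω) = v • (U * Uᵀ) := by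
  rw [crossMoment_mulVec_left U hc (memLp_mulVec U hc), crossMoment_mulVec_right U hc hc, hcc,
    smul_mul, Matrix.one_mul, Matrix.mul_smul]

lemma crossMoment_signal_measurement (hc : MemLp c 2 μ) (hz : MemLp z 2 μ)
    (hcc : crossMoment μ c c = v • 1) (hcz : crossMoment μ c z = 0) :
    crossMoment μ (fun ω => U *ᵥ c ω) (fun ω => U *ᵥ c ω + z ω) = v • (U * Uᵀ) := by
  have hx := memLp_mulVec U hc
  rw [crossMoment_add_right hx hx hz, crossMoment_signal_signal hc hcc,
    crossMoment_mulVec_left U hc hz, hcz, Matrix.mul_zero, add_zero]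

lemma crossMoment_measurement_measurement [DecidableEq ι] (hc : MemLp c 2 μ) (hz : MemLp z 2 μ)
    (hcc : crossMoment μ c c = v • 1) (hzz : crossMoment μ z z = w • 1)
    (hcz : crossMoment μ c z = 0) :
    crossMoment μ (fun ω => U *ᵥ c ω + z ω) (fun ω => U *ᵥ c ω + z ω) =
      v • (U * Uᵀ) + w • 1 := by
  have hx := memLp_mulVec U hc
  have hy : MemLp (fun ω => U *ᵥ c ω + z ω) 2 μ := hx.add hz
  rw [crossMoment_add_left hx hz hy, crossMoment_signal_measurement hc hz hcc hcz,
    crossMoment_add_right hz hx hz, hzz, crossMoment_mulVec_right U hz hc,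
    ← transpose_crossMoment c z, hcz, transpose_zero, Matrix.zero_mul, zero_add]

lemma normal_equation_smul_mul_transpose [DecidableEq ι] (hU : Uᵀ * U = 1) (hc : MemLp c 2 μ)
    (hz : MemLp z 2 μ) (hcc : crossMoment μ c c = v • 1) (hzz : crossMoment μ z z = w • 1)
    (hcz : crossMoment μ c z = 0) (hs : s * (v + w) = v) :
    s • (U * Uᵀ) * crossMoment μ (fun ω => U *ᵥ c ω + z ω) (fun ω => U *ᵥ c ω + z ω) =
      crossMoment μ (fun ω => U *ᵥ c ω) (fun ω => U *ᵥ c ω + z ω) := by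
  rw [crossMoment_measurement_measurement hc hz hcc hzz hcz,
    crossMoment_signal_measurement hc hz hcc hcz, Matrix.mul_add, smul_mul_smul_comm,
    smul_mul_smul_comm, Matrix.mul_one, isIdempotentElem_mul_transpose hU, ← add_smul, ← mul_add,
    hs]

lemma meanSqError_smul_mul_transpose [DecidableEq ι] (hU : Uᵀ * U = 1) (hc : MemLp c 2 μ)
    (hz : MemLp z 2 μ) (hcc : crossMoment μ c c = v • 1) (hzz : crossMoment μ z z = w • 1)
    (hcz : crossMoment μ c z = 0) (hs : s * (v + w) = v) :
    meanSqError μ (fun ω => U *ᵥ c ω) (fun ω => U *ᵥ c ω + z ω) (s • (U * Uᵀ)) =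
      (1 - s) * v * Fintype.card κ := by
  have hx := memLp_mulVec U hc
  have hy : MemLp (fun ω => U *ᵥ c ω + z ω) 2 μ := hx.add hz
  rw [meanSqError_eq_trace_of_normal_equation hx hy
      (normal_equation_smul_mul_transpose hU hc hz hcc hzz hcz hs),
    crossMoment_signal_signal hc hcc, ← transpose_crossMoment,
    crossMoment_signal_measurement hc hz hcc hcz, transpose_smul, transpose_mul,
    transpose_transpose, smul_mul_smul_comm, isIdempotentElem_mul_transpose hU, ← sub_smul,
    trace_smul, trace_mul_transpose_eq_card hU, smul_eq_mul]
  ring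

end SubspaceModel

section Independence

variable {Ω ι κ : Type*} [MeasurableSpace Ω] {μ : Measure Ω} {X : Ω → ι → ℝ} {Y : Ω → κ → ℝ}

lemma crossMoment_eq_zero_of_indepFun (h : IndepFun X Y μ) (hX : AEMeasurable X μ)
    (hY : AEMeasurable Y μ) (hX₀ : ∀ i, ∫ ω, X ω i ∂μ = 0) : crossMoment μ X Y = 0 := by
  ext i j
  have hij : IndepFun (fun ω => X ω i) (fun ω => Y ω j) μ :=
    h.comp (measurable_pi_apply i) (measurable_pi_apply j)
  rw [crossMoment_apply, hij.integral_fun_mul_eq_mul_integral (by fun_prop) (by fun_prop), hX₀,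
    zero_mul, Matrix.zero_apply]

lemma crossMoment_self_of_iIndepFun [DecidableEq ι] (h : iIndepFun (fun i ω => X ω i) μ)
    (hX : AEMeasurable X μ) (hX₀ : ∀ i, ∫ ω, X ω i ∂μ = 0) :
    crossMoment μ X X = diagonal fun i => Var[fun ω => X ω i; μ] := by
  ext i j
  obtain rfl | hij := eq_or_ne i j
  · rw [diagonal_apply_eq, variance_of_integral_eq_zero (by fun_prop) (hX₀ i)]
    simp only [crossMoment_apply, sq]
  · rw [crossMoment_apply, diagonal_apply_ne _ hij,
      (h.indepFun hij).integral_fun_mul_eq_mul_integral (by fun_prop) (by fun_prop), hX₀, zero_mul]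

variable [Fintype ι] {ν : ι → Measure ℝ} [∀ i, IsProbabilityMeasure (ν i)]

lemma hasLaw_apply_of_hasLaw_pi (hX : HasLaw X (Measure.pi ν) μ) (i : ι) :
    HasLaw (fun ω => X ω i) (ν i) μ :=
  (measurePreserving_eval ν i).fun_comp_hasLaw hX

lemma memLp_of_hasLaw_pi {p : ENNReal} (hX : HasLaw X (Measure.pi ν) μ)
    (hν : ∀ i, MemLp id p (ν i)) : MemLp X p μ := by
  refine MemLp.of_eval fun i => ?_
  have hXi := hasLaw_apply_of_hasLaw_pi hX i
  exact (hXi.map_eq ▸ hν i).comp_of_map hXi.aemeasurable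

lemma crossMoment_self_of_hasLaw_pi [DecidableEq ι] (hX : HasLaw X (Measure.pi ν) μ)
    (hν₀ : ∀ i, ∫ t, t ∂ν i = 0) :
    crossMoment μ X X = diagonal fun i => Var[id; ν i] := by
  have := hX.isProbabilityMeasure
  have hXi := hasLaw_apply_of_hasLaw_pi hX
  have hindep : iIndepFun (fun i ω => X ω i) μ := (iIndepFun_iff_hasLaw_pi_pi hXi).2 hX
  rw [crossMoment_self_of_iIndepFun hindep hX.aemeasurable
    fun i => (hXi i).integral_eq.trans (hν₀ i)]
  simp only [fun i => (hXi i).variance_eq]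

end Independence

section GaussianVector

variable {Ω ι : Type*} [MeasurableSpace Ω] {μ : Measure Ω} [Fintype ι] {X : Ω → ι → ℝ} {v : NNReal}

lemma memLp_two_of_hasLaw_pi_gaussianReal
    (hX : HasLaw X (Measure.pi fun _ => gaussianReal 0 v) μ) : MemLp X 2 μ :=
  memLp_of_hasLaw_pi hX fun _ => memLp_id_gaussianReal 2

lemma integral_apply_of_hasLaw_pi_gaussianReal
    (hX : HasLaw X (Measure.pi fun _ => gaussianReal 0 v) μ) (i : ι) : ∫ ω, X ω i ∂μ = 0 :=
  (hasLaw_apply_of_hasLaw_pi hX i).integral_eq.trans integral_id_gaussianReal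

lemma crossMoment_self_of_hasLaw_pi_gaussianReal [DecidableEq ι]
    (hX : HasLaw X (Measure.pi fun _ => gaussianReal 0 v) μ) :
    crossMoment μ X X = (v : ℝ) • 1 := by
  rw [crossMoment_self_of_hasLaw_pi hX fun _ => integral_id_gaussianReal, smul_one_eq_diagonal]
  simp only [variance_id_gaussianReal]

end GaussianVector

theorem stmt8_general (n d : ℕ) (hd : 1 ≤ d) {Ω : Type*} [MeasurableSpace Ω] (μ : Measure Ω)
    (σz : ℝ) (U : Matrix (Fin n) (Fin d) ℝ) (hU : Uᵀ * U = 1)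
    (c : Ω → Fin d → ℝ) (z : Ω → Fin n → ℝ) (hc : MemLp c 2 μ) (hz : MemLp z 2 μ)
    (hcc : crossMoment μ c c = (1 / (d : ℝ)) • 1)
    (hzz : crossMoment μ z z = (σz ^ 2 / (n : ℝ)) • 1) (hcz : crossMoment μ c z = 0)
    (Wstar : Matrix (Fin n) (Fin n) ℝ)
    (hWstar : Wstar = (1 / (1 + σz ^ 2 * d / n)) • (U * Uᵀ)) :
    (∀ W : Matrix (Fin n) (Fin n) ℝ,
        riskLin n d μ U c z Wstar ≤ riskLin n d μ U c z W) ∧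
      riskLin n d μ U c z Wstar = (σz ^ 2 * d / n) / (1 + σz ^ 2 * d / n) := by
  have hd₀ : (d : ℝ) ≠ 0 := Nat.cast_ne_zero.2 (Nat.one_le_iff_ne_zero.1 hd)
  have hden : 1 + σz ^ 2 * d / n ≠ 0 := by positivity
  have hs : 1 / (1 + σz ^ 2 * d / n) * (1 / (d : ℝ) + σz ^ 2 / n) = 1 / d := by
    rw [show 1 / (d : ℝ) + σz ^ 2 / n = (1 + σz ^ 2 * d / n) * (1 / d) by field_simp,
      ← mul_assoc, one_div_mul_cancel hden, one_mul]
  have hrisk : riskLin n d μ U c z =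
      meanSqError μ (fun ω => U *ᵥ c ω) (fun ω => U *ᵥ c ω + z ω) := rfl
  have hx := memLp_mulVec U hc
  rw [hWstar, hrisk]
  refine ⟨meanSqError_le_of_normal_equation hx (hx.add hz)
    (normal_equation_smul_mul_transpose hU hc hz hcc hzz hcz hs), ?_⟩
  rw [meanSqError_smul_mul_transpose hU hc hz hcc hzz hcz hs, Fintype.card_fin, mul_assoc,
    one_div_mul_cancel hd₀, mul_one, one_sub_div hden, add_sub_cancel_left]

/-- In the linear subspace denoising model, the matrix
`W* = (1/(1 + σ_z² d/n)) U Uᵀ` minimizes the risk `R` over all `W ∈ ℝ^{n×n}`,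
and the optimal risk equals `R(W*) = (σ_z² d/n)/(1 + σ_z² d/n)`. -/
theorem stmt8 (n d : ℕ) (hd : 1 ≤ d) (hdn : d ≤ n)
    {Ω : Type*} [MeasurableSpace Ω] (μ : Measure Ω) [IsProbabilityMeasure μ]
    (σz σe : ℝ) (hσz : 0 ≤ σz) (hσe : 0 ≤ σe)
    (U : Matrix (Fin n) (Fin d) ℝ) (hU : Uᵀ * U = 1)
    (c : Ω → Fin d → ℝ) (z : Ω → Fin n → ℝ)
    (hc : Measurable c) (hz : Measurable z)
    (hlaw : Measure.map (fun ω => (c ω, z ω)) μ =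
      (Measure.pi fun _ : Fin d => gaussianReal 0 ((1 / (d : ℝ)).toNNReal)).prod
        (Measure.pi fun _ : Fin n => gaussianReal 0 ((σz ^ 2 / (n : ℝ)).toNNReal)))
    (Wstar : Matrix (Fin n) (Fin n) ℝ)
    (hWstar : Wstar = (1 / (1 + σz ^ 2 * d / n)) • (U * Uᵀ)) :
    (∀ W : Matrix (Fin n) (Fin n) ℝ,
        riskLin n d μ U c z Wstar ≤ riskLin n d μ U c z W) ∧
      riskLin n d μ U c z Wstar = (σz ^ 2 * d / n) / (1 + σz ^ 2 * d / n) := by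
  have hcz : HasLaw (fun ω => (c ω, z ω)) _ μ := ⟨(hc.prodMk hz).aemeasurable, hlaw⟩
  have hc' := measurePreserving_fst.fun_comp_hasLaw hcz
  have hz' := measurePreserving_snd.fun_comp_hasLaw hcz
  have hindep : IndepFun c z μ := (indepFun_iff_hasLaw_prodMk_prod hc' hz').2 hcz
  have hcc := crossMoment_self_of_hasLaw_pi_gaussianReal hc'
  have hzz := crossMoment_self_of_hasLaw_pi_gaussianReal hz'
  rw [Real.coe_toNNReal _ (by positivity)] at hcc hzz
  exact stmt8_general n d hd μ σz U hU c z (memLp_two_of_hasLaw_pi_gaussianReal hc')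
    (memLp_two_of_hasLaw_pi_gaussianReal hz') hcc hzz
    (crossMoment_eq_zero_of_indepFun hindep hc.aemeasurable hz.aemeasurable
      (integral_apply_of_hasLaw_pi_gaussianReal hc')) Wstar hWstar
end

section
/- Let d ≥ 2 and n ≥ d be integers, let U ∈ ℝ^{n×d} have orthonormal columns, let c ~ N(0, (1/d) I_d) and x = U c, and let A ∈ ℝ^{n×n} be an arbitrary matrix. Then E‖A x xᵀ‖_F² ≤ (2/d) ‖A U‖_F². -/
open MeasureTheory ProbabilityTheory Matrix

/-!
The integrand equals `‖A U c‖² ‖U c‖²`, and `‖U c‖ = ‖c‖` because the columns of `U` are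
orthonormal. Expanding a row `(b ⬝ᵥ c)² ‖c‖²`, independence and centring kill every term
`c j * c k * c l ^ 2` with `j ≠ k`, whatever `l` is, so only the diagonal weights `E[c j ^ 2 ‖c‖²]`
survive. Such a weight is at most `(3 + (d - 1)) / d²`, which is at most `2 / d` as soon as `d ≥ 2`.
The only input from the Gaussian law beyond its mean and variance is the fourth moment `3 / d²`,
read off from the differential equation `deriv M t = (m + v t) M t` of the moment generating
function.
-/

section GaussianMoments

open scoped ContDiff

lemma iteratedDeriv_add_two_of_deriv_eq_affine_mul {f : ℝ → ℝ} (hf : ContDiff ℝ ∞ f) {m v : ℝ}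
    (hderiv : ∀ t, deriv f t = (m + v * t) * f t) (k : ℕ) (t : ℝ) :
    iteratedDeriv (k + 2) f t =
      (m + v * t) * iteratedDeriv (k + 1) f t + (k + 1) * v * iteratedDeriv k f t := by
  have hasDerivAt_iter (j : ℕ) (s : ℝ) :
      HasDerivAt (iteratedDeriv j f) (iteratedDeriv (j + 1) f s) s := by
    rw [iteratedDeriv_succ]
    exact (hf.differentiable_iteratedDeriv j (mod_cast ENat.natCast_lt_top j) s).hasDerivAt
  have hasDerivAt_affine (s : ℝ) : HasDerivAt (fun r ↦ m + v * r) v s := by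
    simpa using ((hasDerivAt_id s).const_mul v).const_add m
  induction k generalizing t with
  | zero =>
    have iter_one : iteratedDeriv 1 f = fun s ↦ (m + v * s) * iteratedDeriv 0 f s := by
      simpa only [iteratedDeriv_one, iteratedDeriv_zero] using funext hderiv
    calc iteratedDeriv 2 f t = deriv (iteratedDeriv 1 f) t := by rw [iteratedDeriv_succ]
      _ = v * iteratedDeriv 0 f t + (m + v * t) * iteratedDeriv 1 f t := by
        rw [iter_one, ((hasDerivAt_affine t).fun_mul (hasDerivAt_iter 0 t)).deriv, iter_one]
      _ = _ := by push_cast; ring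
  | succ k ih =>
    calc iteratedDeriv (k + 3) f t = deriv (iteratedDeriv (k + 2) f) t := by rw [iteratedDeriv_succ]
      _ = deriv (fun s ↦ (m + v * s) * iteratedDeriv (k + 1) f s +
          (k + 1) * v * iteratedDeriv k f s) t := by rw [funext ih]
      _ = v * iteratedDeriv (k + 1) f t + (m + v * t) * iteratedDeriv (k + 2) f t +
          (k + 1) * v * iteratedDeriv (k + 1) f t :=
        (((hasDerivAt_affine t).fun_mul (hasDerivAt_iter (k + 1) t)).fun_add
          ((hasDerivAt_iter k t).const_mul ((k + 1) * v))).deriv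
      _ = _ := by push_cast; ring

lemma integral_pow_add_two_gaussianReal (m : ℝ) (v : NNReal) (k : ℕ) :
    ∫ x, x ^ (k + 2) ∂gaussianReal m v =
      m * ∫ x, x ^ (k + 1) ∂gaussianReal m v + (k + 1) * v * ∫ x, x ^ k ∂gaussianReal m v := by
  have moment (j : ℕ) : ∫ x, x ^ j ∂gaussianReal m v =
      iteratedDeriv j (fun t ↦ Real.exp (m * t + v * t ^ 2 / 2)) 0 := by
    rw [← mgf_id_gaussianReal, iteratedDeriv_mgf_zero (by simp)]
    rfl
  have deriv_mgf (t : ℝ) : deriv (fun t ↦ Real.exp (m * t + v * t ^ 2 / 2)) t =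
      (m + v * t) * Real.exp (m * t + v * t ^ 2 / 2) := by
    have exponent : HasDerivAt (fun t ↦ m * t + v * t ^ 2 / 2) (m + v * t) t := by
      convert! ((hasDerivAt_id' t).const_mul m).fun_add
        ((((hasDerivAt_id' t).fun_pow 2).const_mul (v : ℝ)).div_const 2) using 1
      norm_num
      ring
    rw [exponent.exp.deriv, mul_comm]
  simpa only [moment, mul_zero, add_zero] using
    iteratedDeriv_add_two_of_deriv_eq_affine_mul (by fun_prop) deriv_mgf k 0

lemma integral_sq_gaussianReal_zero (v : NNReal) : ∫ x, x ^ 2 ∂gaussianReal 0 v = v := by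
  simpa using integral_pow_add_two_gaussianReal 0 v 0

lemma integral_pow_four_gaussianReal_zero (v : NNReal) :
    ∫ x, x ^ 4 ∂gaussianReal 0 v = 3 * (v : ℝ) ^ 2 := by
  rw [integral_pow_add_two_gaussianReal 0 v 2, integral_sq_gaussianReal_zero]
  push_cast
  ring

end GaussianMoments

lemma mul_mul_sq_eq_prod_pow {ι R : Type*} [Fintype ι] [DecidableEq ι] [CommMonoid R]
    (x : ι → R) (j k l : ι) :
    x j * x k * x l ^ 2 =
      ∏ i, x i ^ ((if i = j then 1 else 0) + (if i = k then 1 else 0) +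
        if i = l then 2 else 0) := by
  simp only [pow_add, Finset.prod_mul_distrib, pow_ite]
  simp

lemma sq_dotProduct_mul_eq_sum {ι R : Type*} [Fintype ι] [CommSemiring R] (b x : ι → R) (r : R) :
    (b ⬝ᵥ x) ^ 2 * r = ∑ j, ∑ k, b j * b k * (x j * x k * r) := by
  simp_rw [dotProduct, sq, Finset.sum_mul_sum, Finset.sum_mul]
  exact Finset.sum_congr rfl fun j _ ↦ Finset.sum_congr rfl fun k _ ↦ by ring

lemma sum_sum_mul_sq {m n R : Type*} [Fintype m] [Fintype n] [CommSemiring R] (a : m → R)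
    (b : n → R) :
    ∑ i, ∑ j, (a i * b j) ^ 2 = (∑ i, a i ^ 2) * ∑ j, b j ^ 2 := by
  simp_rw [mul_pow, Finset.sum_mul_sum]

lemma sum_sq_mulVec_of_transpose_mul_self_eq_one {n ι R : Type*} [Fintype n] [Fintype ι]
    [DecidableEq ι] [CommSemiring R] {U : Matrix n ι R} (hU : Uᵀ * U = 1) (x : ι → R) :
    ∑ j, (U *ᵥ x) j ^ 2 = ∑ l, x l ^ 2 := by
  have dot_self : U *ᵥ x ⬝ᵥ U *ᵥ x = x ⬝ᵥ x := by
    rw [dotProduct_mulVec, vecMul_mulVec, ← dotProduct_mulVec, hU, one_mulVec]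
  simpa only [dotProduct, ← sq] using dot_self

section IndependentCoordinates

variable {ι : Type*} [Fintype ι] {ν : ι → Measure ℝ}

lemma integral_prod_pow_pi [∀ i, SigmaFinite (ν i)] (e : ι → ℕ) :
    ∫ x, ∏ i, x i ^ e i ∂Measure.pi ν = ∏ i, ∫ t, t ^ e i ∂ν i :=
  integral_fintype_prod_eq_prod (fun i t ↦ t ^ e i)

lemma integral_prod_pow_pi_eq_zero [∀ i, SigmaFinite (ν i)] {e : ι → ℕ} {i : ι}
    (hmean : ∫ t, t ∂ν i = 0) (hi : e i = 1) :
    ∫ x, ∏ i, x i ^ e i ∂Measure.pi ν = 0 := by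
  rw [integral_prod_pow_pi]
  exact Finset.prod_eq_zero (Finset.mem_univ i) (by simpa [hi] using hmean)

section FiniteMeasure

variable [∀ i, IsFiniteMeasure (ν i)]

lemma integrable_prod_pow_pi {p : ℕ} (hν : ∀ i, MemLp id p (ν i)) {e : ι → ℕ} (he : ∀ i, e i ≤ p) :
    Integrable (fun x : ι → ℝ ↦ ∏ i, x i ^ e i) (Measure.pi ν) := by
  refine Integrable.fintype_prod_dep (f := fun i t ↦ t ^ e i) fun i ↦ ?_
  have norm_pow : Integrable (fun t : ℝ ↦ ‖id t‖ ^ e i) (ν i) :=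
    ((hν i).mono_exponent (mod_cast he i)).integrable_norm_pow'
  exact (integrable_norm_iff (by fun_prop)).1 (by simpa using norm_pow)

lemma integrable_mul_mul_sq_pi (hν : ∀ i, MemLp id 4 (ν i)) (j k l : ι) :
    Integrable (fun x : ι → ℝ ↦ x j * x k * x l ^ 2) (Measure.pi ν) := by
  classical
  simp_rw [mul_mul_sq_eq_prod_pow]
  exact integrable_prod_pow_pi (p := 4) hν fun i ↦ by split_ifs <;> norm_num

lemma integrable_mul_mul_sum_sq_pi (hν : ∀ i, MemLp id 4 (ν i)) (j k : ι) :
    Integrable (fun x : ι → ℝ ↦ x j * x k * ∑ l, x l ^ 2) (Measure.pi ν) := by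
  simp_rw [Finset.mul_sum]
  exact integrable_finsetSum _ fun l _ ↦ integrable_mul_mul_sq_pi hν j k l

lemma integral_mul_mul_sum_sq_pi_of_ne (hν : ∀ i, MemLp id 4 (ν i))
    (hmean : ∀ i, ∫ t, t ∂ν i = 0) {j k : ι} (hjk : j ≠ k) :
    ∫ x, x j * x k * ∑ l, x l ^ 2 ∂Measure.pi ν = 0 := by
  classical
  simp_rw [Finset.mul_sum]
  rw [integral_finsetSum _ fun l _ ↦ integrable_mul_mul_sq_pi hν j k l]
  refine Finset.sum_eq_zero fun l _ ↦ ?_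
  simp_rw [mul_mul_sq_eq_prod_pow]
  -- One of the coordinates `j`, `k` differs from `l` and hence occurs with exponent one.
  rcases eq_or_ne j l with rfl | hjl
  · exact integral_prod_pow_pi_eq_zero (hmean k) (by simp [hjk.symm])
  · exact integral_prod_pow_pi_eq_zero (hmean j) (by simp [hjk, hjl])

lemma integrable_sq_dotProduct_mul_sum_sq_pi (hν : ∀ i, MemLp id 4 (ν i)) (b : ι → ℝ) :
    Integrable (fun x ↦ (b ⬝ᵥ x) ^ 2 * ∑ l, x l ^ 2) (Measure.pi ν) := by
  simp_rw [sq_dotProduct_mul_eq_sum]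
  exact integrable_finsetSum _ fun j _ ↦ integrable_finsetSum _ fun k _ ↦
    (integrable_mul_mul_sum_sq_pi hν j k).const_mul _

lemma integral_sq_dotProduct_mul_sum_sq_pi (hν : ∀ i, MemLp id 4 (ν i))
    (hmean : ∀ i, ∫ t, t ∂ν i = 0) (b : ι → ℝ) :
    ∫ x, (b ⬝ᵥ x) ^ 2 * ∑ l, x l ^ 2 ∂Measure.pi ν =
      ∑ j, b j ^ 2 * ∫ x, x j * x j * ∑ l, x l ^ 2 ∂Measure.pi ν := by
  have integrable_term (j k : ι) :
      Integrable (fun x ↦ b j * b k * (x j * x k * ∑ l, x l ^ 2)) (Measure.pi ν) :=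
    (integrable_mul_mul_sum_sq_pi hν j k).const_mul _
  simp_rw [sq_dotProduct_mul_eq_sum]
  rw [integral_finsetSum _ fun j _ ↦ integrable_finsetSum _ fun k _ ↦ integrable_term j k]
  refine Finset.sum_congr rfl fun j _ ↦ ?_
  rw [integral_finsetSum _ fun k _ ↦ integrable_term j k]
  simp_rw [integral_const_mul]
  rw [Fintype.sum_eq_single j fun k hkj ↦ by
    rw [integral_mul_mul_sum_sq_pi_of_ne hν hmean hkj.symm, mul_zero], sq]

end FiniteMeasure

section ProbabilityMeasure

variable [∀ i, IsProbabilityMeasure (ν i)]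

lemma integral_mul_self_mul_sq_pi_of_ne {j l : ι} (hjl : j ≠ l) :
    ∫ x, x j * x j * x l ^ 2 ∂Measure.pi ν = (∫ t, t ^ 2 ∂ν j) * ∫ t, t ^ 2 ∂ν l := by
  classical
  simp_rw [mul_mul_sq_eq_prod_pow]
  rw [integral_prod_pow_pi, Fintype.prod_eq_mul j l hjl fun i hi ↦ by simp [hi.1, hi.2]]
  simp [hjl, hjl.symm]

lemma integral_mul_self_mul_sum_sq_pi [DecidableEq ι] (hν : ∀ i, MemLp id 4 (ν i)) (j : ι) :
    ∫ x, x j * x j * ∑ l, x l ^ 2 ∂Measure.pi ν =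
      ∫ t, t ^ 4 ∂ν j + ∑ l ∈ Finset.univ.erase j, (∫ t, t ^ 2 ∂ν j) * ∫ t, t ^ 2 ∂ν l := by
  have fourth : ∫ x, x j * x j * x j ^ 2 ∂Measure.pi ν = ∫ t, t ^ 4 ∂ν j := by
    rw [← integral_comp_eval (μ := ν) (i := j) (f := fun t ↦ t ^ 4) (by fun_prop)]
    congr with x
    ring
  simp_rw [Finset.mul_sum]
  rw [integral_finsetSum _ fun l _ ↦ integrable_mul_mul_sq_pi hν j j l,
    ← Finset.add_sum_erase _ _ (Finset.mem_univ j), fourth]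
  congr 1
  exact Finset.sum_congr rfl fun l hl ↦
    integral_mul_self_mul_sq_pi_of_ne (Finset.ne_of_mem_erase hl).symm

lemma integral_mul_self_mul_sum_sq_pi_le (hν : ∀ i, MemLp id 4 (ν i)) {s : ℝ}
    (hvar : ∀ i, ∫ t, t ^ 2 ∂ν i = s) (hfourth : ∀ i, ∫ t, t ^ 4 ∂ν i ≤ 3 * s ^ 2) (j : ι) :
    ∫ x, x j * x j * ∑ l, x l ^ 2 ∂Measure.pi ν ≤ (Fintype.card ι + 2) * s ^ 2 := by
  classical
  have card_pos : 1 ≤ Fintype.card ι := Fintype.card_pos_iff.2 ⟨j⟩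
  rw [integral_mul_self_mul_sum_sq_pi hν]
  simp only [hvar, Finset.sum_const, Finset.card_erase_of_mem (Finset.mem_univ j),
    Finset.card_univ, nsmul_eq_mul, Nat.cast_sub card_pos, Nat.cast_one]
  linarith [hfourth j]

lemma integral_sum_sq_mulVec_mul_sum_sq_pi_le {m : Type*} [Fintype m]
    (hν : ∀ i, MemLp id 4 (ν i)) (hmean : ∀ i, ∫ t, t ∂ν i = 0) {s : ℝ}
    (hvar : ∀ i, ∫ t, t ^ 2 ∂ν i = s) (hfourth : ∀ i, ∫ t, t ^ 4 ∂ν i ≤ 3 * s ^ 2)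
    (B : Matrix m ι ℝ) :
    ∫ x, (∑ i, (B *ᵥ x) i ^ 2) * ∑ l, x l ^ 2 ∂Measure.pi ν ≤
      (Fintype.card ι + 2) * s ^ 2 * ∑ i, ∑ j, B i j ^ 2 := by
  simp_rw [Finset.sum_mul, Matrix.mulVec]
  rw [integral_finsetSum _ fun i _ ↦ integrable_sq_dotProduct_mul_sum_sq_pi hν (B i),
    Finset.mul_sum]
  gcongr with i _
  rw [integral_sq_dotProduct_mul_sum_sq_pi hν hmean, Finset.mul_sum]
  refine Finset.sum_le_sum fun j _ ↦ ?_
  rw [mul_comm]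
  gcongr
  exact integral_mul_self_mul_sum_sq_pi_le hν hvar hfourth j

end ProbabilityMeasure

end IndependentCoordinates

theorem stmt13_general {m n ι Ω : Type*} [Fintype m] [Fintype n] [Fintype ι] [DecidableEq ι]
    [MeasurableSpace Ω] {μ : Measure Ω} {ν : ι → Measure ℝ} [∀ i, IsProbabilityMeasure (ν i)]
    (hcard : 2 ≤ Fintype.card ι) {U : Matrix n ι ℝ} (hU : Uᵀ * U = 1)
    {c : Ω → ι → ℝ} (hc : HasLaw c (Measure.pi ν) μ)
    (hν : ∀ i, MemLp id 4 (ν i)) (hmean : ∀ i, ∫ t, t ∂ν i = 0)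
    (hvar : ∀ i, ∫ t, t ^ 2 ∂ν i = 1 / Fintype.card ι)
    (hfourth : ∀ i, ∫ t, t ^ 4 ∂ν i ≤ 3 * (1 / Fintype.card ι) ^ 2) (A : Matrix m n ℝ) :
    ∫ ω, ∑ i, ∑ j, ((A *ᵥ (U *ᵥ c ω)) i * (U *ᵥ c ω) j) ^ 2 ∂μ ≤
      2 / Fintype.card ι * ∑ i, ∑ j, (A * U) i j ^ 2 := by
  have hcard' : (2 : ℝ) ≤ Fintype.card ι := mod_cast hcard
  simp_rw [sum_sum_mul_sq, sum_sq_mulVec_of_transpose_mul_self_eq_one hU, mulVec_mulVec]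
  calc ∫ ω, (∑ i, ((A * U) *ᵥ c ω) i ^ 2) * ∑ l, c ω l ^ 2 ∂μ
      = ∫ x, (∑ i, ((A * U) *ᵥ x) i ^ 2) * ∑ l, x l ^ 2 ∂Measure.pi ν :=
        hc.integral_comp (f := fun x ↦ (∑ i, ((A * U) *ᵥ x) i ^ 2) * ∑ l, x l ^ 2)
          (Continuous.aestronglyMeasurable (by fun_prop))
    _ ≤ (Fintype.card ι + 2) * (1 / Fintype.card ι) ^ 2 * ∑ i, ∑ j, (A * U) i j ^ 2 :=
        integral_sum_sq_mulVec_mul_sum_sq_pi_le hν hmean hvar hfourth (A * U)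
    _ ≤ 2 / Fintype.card ι * ∑ i, ∑ j, (A * U) i j ^ 2 := by
        gcongr
        field_simp
        linarith

/-- For `x = U c` with `c ~ N(0, (1/d) I_d)`, `U ∈ ℝ^{n×d}` with
orthonormal columns, `d ≥ 2`, and an arbitrary matrix `A ∈ ℝ^{n×n}`,
`E‖A x xᵀ‖_F² ≤ (2/d) ‖A U‖_F²`. -/
theorem stmt13 (n d : ℕ) (hd : 2 ≤ d) (hdn : d ≤ n)
    {Ω : Type*} [MeasurableSpace Ω] (μ : Measure Ω) [IsProbabilityMeasure μ]
    (U : Matrix (Fin n) (Fin d) ℝ) (hU : Uᵀ * U = 1)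
    (c : Ω → Fin d → ℝ) (hc : Measurable c)
    (hlaw : Measure.map c μ =
      Measure.pi fun _ : Fin d => gaussianReal 0 ((1 / (d : ℝ)).toNNReal))
    (A : Matrix (Fin n) (Fin n) ℝ) :
    ∫ ω, ∑ i, ∑ j, ((A.mulVec (U.mulVec (c ω)) i) * (U.mulVec (c ω) j)) ^ 2 ∂μ ≤
      (2 / (d : ℝ)) * ∑ i, ∑ j, ((A * U) i j) ^ 2 := by
  simpa using stmt13_general (by simpa) hU ⟨hc.aemeasurable, hlaw⟩
    (fun _ ↦ memLp_id_gaussianReal' 4 (by simp)) (fun _ ↦ integral_id_gaussianReal)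
    (fun _ ↦ by simp [integral_sq_gaussianReal_zero])
    (fun _ ↦ by simp [integral_pow_four_gaussianReal_zero]) A
end

section
/- Consider the linear subspace denoising model with 2 ≤ d ≤ n and σ_z² ≤ 1. Then E‖(W* − I)(x xᵀ + x zᵀ) + W*(z xᵀ + z zᵀ)‖_F² ≤ 24 (d/n) σ_z². -/
open MeasureTheory ProbabilityTheory Matrix

/-!
With `y = x + z`, the random matrix is the outer product `(W* y - x) yᵀ`, whose squared Frobenius
norm is `‖W* y - x‖² ‖y‖²`. Since `W*` is the linear least-squares estimator of `x` from `y`, the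
residual `W* y - x` is uncorrelated with `y`; both are linear images of the same Gaussian vector
`(c, z)`, so they are independent and the expectation factors. With `s = σ_z² d / n` the two factors
are `E‖W* y - x‖² = s / (1 + s)` and `E‖y‖² = 1 + σ_z²`.
-/

open scoped NNReal

section CenteredGaussian

lemma measurable_dotProduct_self {ι : Type*} [Fintype ι] :
    Measurable fun v : ι → ℝ ↦ v ⬝ᵥ v := by
  unfold dotProduct
  fun_prop

variable {Ω ι : Type*} [MeasurableSpace Ω]

/-- The random vector `X` is centered Gaussian with covariance matrix `S` under `μ`. `S` may be
singular, so that the class is stable under arbitrary linear maps. -/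
structure IsCenteredGaussian (X : Ω → ι → ℝ) (S : Matrix ι ι ℝ) (μ : Measure Ω) : Prop where
  hasGaussianLaw : HasGaussianLaw X μ
  integral_eval : ∀ i, ∫ ω, X ω i ∂μ = 0
  covariance_eval : ∀ i j, cov[fun ω ↦ X ω i, fun ω ↦ X ω j; μ] = S i j

namespace IsCenteredGaussian

variable {μ : Measure Ω} {m m' : Type*} {X : Ω → ι → ℝ} {S : Matrix ι ι ℝ}

lemma memLp_two_eval (hX : IsCenteredGaussian X S μ) (i : ι) : MemLp (fun ω ↦ X ω i) 2 μ :=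
  (hX.hasGaussianLaw.eval i).memLp_two

variable [Fintype ι]

lemma of_hasLaw_pi [DecidableEq ι] {v : ι → ℝ≥0}
    (hX : HasLaw X (Measure.pi fun i ↦ gaussianReal 0 (v i)) μ) :
    IsCenteredGaussian X (diagonal fun i ↦ (v i : ℝ)) μ := by
  have := hX.isProbabilityMeasure
  have law_eval (i : ι) : HasLaw (fun ω ↦ X ω i) (gaussianReal 0 (v i)) μ :=
    (measurePreserving_eval (fun i ↦ gaussianReal 0 (v i)) i).fun_comp_hasLaw hX
  have indep : iIndepFun (fun i ω ↦ X ω i) μ := (iIndepFun_iff_hasLaw_pi_pi law_eval).2 hX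
  have gaussian_eval (i : ι) : HasGaussianLaw (fun ω ↦ X ω i) μ := (law_eval i).hasGaussianLaw
  refine ⟨indep.hasGaussianLaw gaussian_eval, fun i ↦ ?_, fun i j ↦ ?_⟩
  · rw [(law_eval i).integral_eq, integral_id_gaussianReal]
  · obtain rfl | hij := eq_or_ne i j
    · rw [covariance_self (law_eval i).aemeasurable, (law_eval i).variance_eq,
        variance_id_gaussianReal, diagonal_apply_eq]
    · rw [diagonal_apply_ne _ hij]
      exact (indep.indepFun hij).covariance_eq_zero (gaussian_eval i).memLp_two
        (gaussian_eval j).memLp_two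

lemma sumElim_of_hasLaw_prod {κ : Type*} [Fintype κ] [DecidableEq ι] [DecidableEq κ]
    {c : Ω → κ → ℝ} {z : Ω → ι → ℝ} {α β : ℝ≥0}
    (hcz : HasLaw (fun ω ↦ (c ω, z ω))
      ((Measure.pi fun _ ↦ gaussianReal 0 α).prod (Measure.pi fun _ ↦ gaussianReal 0 β)) μ) :
    IsCenteredGaussian (fun ω ↦ Sum.elim (c ω) (z ω))
      (fromBlocks ((α : ℝ) • 1) 0 0 ((β : ℝ) • 1)) μ := by
  let v : κ ⊕ ι → ℝ≥0 := Sum.elim (fun _ ↦ α) (fun _ ↦ β)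
  have law : HasLaw (fun ω ↦ Sum.elim (c ω) (z ω)) (Measure.pi fun i ↦ gaussianReal 0 (v i)) μ :=
    ((measurePreserving_sumPiEquivProdPi_symm fun i ↦ gaussianReal 0 (v i)).fun_comp_hasLaw
      hcz).congr (.of_forall fun ω ↦ by ext (k | i) <;> rfl)
  have cov_eq : diagonal (fun i ↦ (v i : ℝ)) = fromBlocks ((α : ℝ) • 1) 0 0 ((β : ℝ) • 1) := by
    rw [smul_one_eq_diagonal, smul_one_eq_diagonal, fromBlocks_diagonal]
    congr 1
    ext (k | i) <;> rfl
  exact cov_eq ▸ .of_hasLaw_pi law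

lemma covariance_mulVec (hX : IsCenteredGaussian X S μ) (A : Matrix m ι ℝ) (B : Matrix m' ι ℝ)
    (i : m) (j : m') :
    cov[fun ω ↦ (A *ᵥ X ω) i, fun ω ↦ (B *ᵥ X ω) j; μ] = (A * S * Bᵀ) i j := by
  have := hX.hasGaussianLaw.isProbabilityMeasure
  simp only [mulVec, dotProduct]
  rw [covariance_fun_sum_fun_sum (fun k ↦ (hX.memLp_two_eval k).const_mul _)
    (fun l ↦ (hX.memLp_two_eval l).const_mul _)]
  simp only [covariance_const_mul_left, covariance_const_mul_right, hX.covariance_eval, mul_apply,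
    transpose_apply, Finset.sum_mul]
  rw [Finset.sum_comm]
  exact Finset.sum_congr rfl fun l _ ↦ Finset.sum_congr rfl fun k _ ↦ by ring

lemma integral_dotProduct_self (hX : IsCenteredGaussian X S μ) :
    ∫ ω, X ω ⬝ᵥ X ω ∂μ = S.trace := by
  have integral_sq (i : ι) : ∫ ω, X ω i ^ 2 ∂μ = S i i := by
    have aemeasurable_eval := (hX.memLp_two_eval i).aemeasurable
    rw [← variance_of_integral_eq_zero aemeasurable_eval (hX.integral_eval i),
      ← covariance_self aemeasurable_eval, hX.covariance_eval]
  simp only [dotProduct, ← sq]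
  rw [integral_finsetSum _ fun i _ ↦ (hX.memLp_two_eval i).integrable_sq]
  exact Finset.sum_congr rfl fun i _ ↦ integral_sq i

lemma mulVec [Finite m] (hX : IsCenteredGaussian X S μ) (A : Matrix m ι ℝ) :
    IsCenteredGaussian (fun ω ↦ A *ᵥ X ω) (A * S * Aᵀ) μ where
  hasGaussianLaw := by
    have := Fintype.ofFinite m
    exact hX.hasGaussianLaw.map_fun A.mulVecLin.toContinuousLinearMap
  integral_eval i := by
    have := hX.hasGaussianLaw.isProbabilityMeasure
    simp only [Matrix.mulVec, dotProduct]
    rw [integral_finsetSum _ fun k _ ↦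
      ((hX.memLp_two_eval k).integrable one_le_two).const_mul (A i k)]
    simp only [integral_const_mul, hX.integral_eval, mul_zero, Finset.sum_const_zero]
  covariance_eval := hX.covariance_mulVec A A

lemma indepFun_mulVec [Finite m] [Finite m'] (hX : IsCenteredGaussian X S μ)
    {A : Matrix m ι ℝ} {B : Matrix m' ι ℝ} (hAB : A * S * Bᵀ = 0) :
    IndepFun (fun ω ↦ A *ᵥ X ω) (fun ω ↦ B *ᵥ X ω) μ := by
  have := Fintype.ofFinite m
  have := Fintype.ofFinite m'
  refine HasGaussianLaw.indepFun_of_covariance_eval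
    (hX.hasGaussianLaw.map_fun (A.mulVecLin.prod B.mulVecLin).toContinuousLinearMap) fun i j ↦ ?_
  rw [hX.covariance_mulVec A B i j, hAB, Matrix.zero_apply]

lemma integral_dotProduct_mulVec_mul [Fintype m] [Fintype m'] (hX : IsCenteredGaussian X S μ)
    {A : Matrix m ι ℝ} {B : Matrix m' ι ℝ} (hAB : A * S * Bᵀ = 0) :
    ∫ ω, ((A *ᵥ X ω) ⬝ᵥ (A *ᵥ X ω)) * ((B *ᵥ X ω) ⬝ᵥ (B *ᵥ X ω)) ∂μ =
      (A * S * Aᵀ).trace * (B * S * Bᵀ).trace := by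
  have indep := (hX.indepFun_mulVec hAB).comp measurable_dotProduct_self measurable_dotProduct_self
  have aemeasurable_A := (hX.mulVec A).hasGaussianLaw.aemeasurable
  have aemeasurable_B := (hX.mulVec B).hasGaussianLaw.aemeasurable
  rw [← (hX.mulVec A).integral_dotProduct_self, ← (hX.mulVec B).integral_dotProduct_self]
  exact indep.integral_fun_mul_eq_mul_integral
    (measurable_dotProduct_self.comp_aemeasurable aemeasurable_A).aestronglyMeasurable
    (measurable_dotProduct_self.comp_aemeasurable aemeasurable_B).aestronglyMeasurable

end IsCenteredGaussian

end CenteredGaussian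

section Denoising

variable {ι κ R : Type*} [Fintype ι]

lemma sum_sum_vecMulVec_sq [Fintype κ] [CommSemiring R] (u : ι → R) (v : κ → R) :
    ∑ i, ∑ j, vecMulVec u v i j ^ 2 = (u ⬝ᵥ u) * (v ⬝ᵥ v) := by
  simp only [vecMulVec_apply, mul_pow, dotProduct, ← sq, Finset.sum_mul_sum]

lemma vecMulVec_residual [DecidableEq ι] [Ring R] (W : Matrix ι ι R) (x z : ι → R) :
    (W - 1) * (vecMulVec x x + vecMulVec x z) + W * (vecMulVec z x + vecMulVec z z) =
      vecMulVec (W *ᵥ (x + z) - x) (x + z) := by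
  simp only [← vecMulVec_add, mul_vecMulVec, ← add_vecMulVec, sub_mulVec, one_mulVec, mulVec_add]
  congr 1
  abel

variable [Fintype κ] [DecidableEq ι]

lemma fromCols_mul_fromBlocks_smul_one_mul_transpose {m m' : Type*} [DecidableEq κ]
    [CommSemiring R] (α β : R) (A : Matrix m κ R) (B : Matrix m ι R)
    (A' : Matrix m' κ R) (B' : Matrix m' ι R) :
    A.fromCols B * (fromBlocks (α • 1) 0 0 (β • 1) : Matrix (κ ⊕ ι) (κ ⊕ ι) R) *
        (A'.fromCols B')ᵀ =
      α • (A * A'ᵀ) + β • (B * B'ᵀ) := by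
  simp [fromCols_mul_fromBlocks, transpose_fromCols, fromCols_mul_fromRows]

variable {Ω : Type*} [MeasurableSpace Ω] {μ : Measure Ω} {c : Ω → κ → ℝ} {z : Ω → ι → ℝ}
  {α β : ℝ≥0}

-- `hW` is the normal equation `E[(W y - x) yᵀ] = 0` of least-squares estimation, with `x = A c`.
lemma integral_residual_of_normal_equation
    (hcz : HasLaw (fun ω ↦ (c ω, z ω))
      ((Measure.pi fun _ ↦ gaussianReal 0 α).prod (Measure.pi fun _ ↦ gaussianReal 0 β)) μ)
    (A : Matrix ι κ ℝ) {W : Matrix ι ι ℝ}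
    (hW : (α : ℝ) • ((W - 1) * A * Aᵀ) + (β : ℝ) • W = 0) :
    ∫ ω, ∑ i, ∑ j,
        ((W - 1) * (vecMulVec (A *ᵥ c ω) (A *ᵥ c ω) + vecMulVec (A *ᵥ c ω) (z ω)) +
          W * (vecMulVec (z ω) (A *ᵥ c ω) + vecMulVec (z ω) (z ω))) i j ^ 2 ∂μ =
      (α * ((W - 1) * A * ((W - 1) * A)ᵀ).trace + β * (W * Wᵀ).trace) *
        (α * (A * Aᵀ).trace + β * Fintype.card ι) := by
  classical
  have residual_eq (ω : Ω) : W *ᵥ (A *ᵥ c ω + z ω) - A *ᵥ c ω =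
      ((W - 1) * A).fromCols W *ᵥ Sum.elim (c ω) (z ω) := by
    rw [fromCols_mulVec_sumElim, ← mulVec_mulVec, sub_mulVec, one_mulVec, mulVec_add]
    abel
  have measurement_eq (ω : Ω) : A *ᵥ c ω + z ω = A.fromCols 1 *ᵥ Sum.elim (c ω) (z ω) := by
    rw [fromCols_mulVec_sumElim, one_mulVec]
  have uncorrelated : ((W - 1) * A).fromCols W *
      (fromBlocks ((α : ℝ) • 1) 0 0 ((β : ℝ) • 1) : Matrix (κ ⊕ ι) (κ ⊕ ι) ℝ) *
      (A.fromCols (1 : Matrix ι ι ℝ))ᵀ = 0 := by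
    rw [fromCols_mul_fromBlocks_smul_one_mul_transpose, transpose_one, mul_one, hW]
  simp only [vecMulVec_residual, sum_sum_vecMulVec_sq, residual_eq]
  simp only [measurement_eq]
  rw [(IsCenteredGaussian.sumElim_of_hasLaw_prod hcz).integral_dotProduct_mulVec_mul uncorrelated]
  simp only [fromCols_mul_fromBlocks_smul_one_mul_transpose, trace_add, trace_smul, smul_eq_mul,
    transpose_one, mul_one, trace_one]

lemma integral_residual_of_orthonormal [DecidableEq κ]
    (hcz : HasLaw (fun ω ↦ (c ω, z ω))
      ((Measure.pi fun _ ↦ gaussianReal 0 α).prod (Measure.pi fun _ ↦ gaussianReal 0 β)) μ)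
    {U : Matrix ι κ ℝ} (hU : Uᵀ * U = 1) {a : ℝ} (ha : a * (α + β) = α) {W : Matrix ι ι ℝ}
    (hW : W = a • (U * Uᵀ)) :
    ∫ ω, ∑ i, ∑ j,
        ((W - 1) * (vecMulVec (U *ᵥ c ω) (U *ᵥ c ω) + vecMulVec (U *ᵥ c ω) (z ω)) +
          W * (vecMulVec (z ω) (U *ᵥ c ω) + vecMulVec (z ω) (z ω))) i j ^ 2 ∂μ =
      (1 - a) * (α * Fintype.card κ) * (α * Fintype.card κ + β * Fintype.card ι) := by
  have WU_eq : (W - 1) * U = (a - 1) • U := by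
    rw [hW, Matrix.sub_mul, Matrix.one_mul, Matrix.smul_mul, Matrix.mul_assoc, hU, Matrix.mul_one,
      sub_smul, one_smul]
  have WW_eq : W * Wᵀ = a ^ 2 • (U * Uᵀ) := by
    rw [hW, transpose_smul, transpose_mul, transpose_transpose, smul_mul_smul_comm,
      Matrix.mul_assoc, ← Matrix.mul_assoc Uᵀ, hU, Matrix.one_mul, sq]
  have trace_eq : (U * Uᵀ).trace = Fintype.card κ := by rw [trace_mul_comm, hU, trace_one]
  have normal_equation : (α : ℝ) • ((W - 1) * U * Uᵀ) + (β : ℝ) • W = 0 := by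
    rw [WU_eq, hW, Matrix.smul_mul, smul_smul, smul_smul, ← add_smul,
      show (α : ℝ) * (a - 1) + β * a = 0 by linear_combination ha, zero_smul]
  rw [integral_residual_of_normal_equation hcz U normal_equation, WU_eq, WW_eq, transpose_smul,
    Matrix.smul_mul, Matrix.mul_smul, smul_smul, trace_smul, trace_smul, trace_eq,
    smul_eq_mul, smul_eq_mul]
  linear_combination a * Fintype.card κ * (α * Fintype.card κ + β * Fintype.card ι) * ha

end Denoising

lemma one_add_mul_div_one_add_le {t s : ℝ} (ht : t ≤ 1) (hs : 0 ≤ s) :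
    (1 + t) * (s / (1 + s)) ≤ 2 * s := by
  have : s / (1 + s) ≤ s := div_le_self hs (by linarith)
  gcongr
  linarith

theorem stmt19_general {n d : ℕ} (hd : 0 < d) {Ω : Type*} [MeasurableSpace Ω] {μ : Measure Ω}
    (σz : ℝ) {U : Matrix (Fin n) (Fin d) ℝ} (hU : Uᵀ * U = 1)
    {c : Ω → Fin d → ℝ} {z : Ω → Fin n → ℝ}
    (hlaw : HasLaw (fun ω ↦ (c ω, z ω))
      ((Measure.pi fun _ ↦ gaussianReal 0 (1 / (d : ℝ)).toNNReal).prod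
        (Measure.pi fun _ ↦ gaussianReal 0 (σz ^ 2 / (n : ℝ)).toNNReal)) μ)
    {Wstar : Matrix (Fin n) (Fin n) ℝ}
    (hWstar : Wstar = (1 / (1 + σz ^ 2 * d / n)) • (U * Uᵀ)) :
    ∫ ω, ∑ i, ∑ j,
        ((Wstar - 1) * (vecMulVec (U *ᵥ c ω) (U *ᵥ c ω) + vecMulVec (U *ᵥ c ω) (z ω)) +
          Wstar * (vecMulVec (z ω) (U *ᵥ c ω) + vecMulVec (z ω) (z ω))) i j ^ 2 ∂μ =
      (1 + σz ^ 2) * (σz ^ 2 * d / n / (1 + σz ^ 2 * d / n)) := by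
  have hn : 0 < n := by
    refine Nat.pos_of_ne_zero fun hn ↦ ?_
    subst hn
    simpa [Matrix.mul_apply] using congrFun₂ hU ⟨0, hd⟩ ⟨0, hd⟩
  have coe_signal : ((1 / (d : ℝ)).toNNReal : ℝ) = 1 / d := Real.coe_toNNReal _ (by positivity)
  have coe_noise : ((σz ^ 2 / (n : ℝ)).toNNReal : ℝ) = σz ^ 2 / n :=
    Real.coe_toNNReal _ (by positivity)
  rw [integral_residual_of_orthonormal hlaw hU (by rw [coe_signal, coe_noise]; field_simp) hWstar,
    coe_signal, coe_noise, Fintype.card_fin, Fintype.card_fin]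
  field_simp
  ring

/-- In the linear subspace denoising model with `2 ≤ d ≤ n` and
`σ_z² ≤ 1`, `E‖(W* - I)(x xᵀ + x zᵀ) + W*(z xᵀ + z zᵀ)‖_F² ≤ 24 (d/n) σ_z²`,
where `x = U c` and `W* = (1/(1 + σ_z² d/n)) U Uᵀ`. -/
theorem stmt19 (n d : ℕ) (hd : 2 ≤ d) (hdn : d ≤ n)
    {Ω : Type*} [MeasurableSpace Ω] (μ : Measure Ω) [IsProbabilityMeasure μ]
    (σz σe : ℝ) (hσz : 0 ≤ σz) (hσz1 : σz ^ 2 ≤ 1) (hσe : 0 ≤ σe)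
    (U : Matrix (Fin n) (Fin d) ℝ) (hU : Uᵀ * U = 1)
    (c : Ω → Fin d → ℝ) (z : Ω → Fin n → ℝ)
    (hc : Measurable c) (hz : Measurable z)
    (hlaw : Measure.map (fun ω => (c ω, z ω)) μ =
      (Measure.pi fun _ : Fin d => gaussianReal 0 ((1 / (d : ℝ)).toNNReal)).prod
        (Measure.pi fun _ : Fin n => gaussianReal 0 ((σz ^ 2 / (n : ℝ)).toNNReal)))
    (Wstar : Matrix (Fin n) (Fin n) ℝ)
    (hWstar : Wstar = (1 / (1 + σz ^ 2 * d / n)) • (U * Uᵀ)) :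
    ∫ ω, ∑ i, ∑ j,
        (((Wstar - 1) *
            (vecMulVec (U.mulVec (c ω)) (U.mulVec (c ω)) +
              vecMulVec (U.mulVec (c ω)) (z ω)) +
          Wstar *
            (vecMulVec (z ω) (U.mulVec (c ω)) +
              vecMulVec (z ω) (z ω))) i j) ^ 2 ∂μ ≤
      24 * ((d : ℝ) / (n : ℝ)) * σz ^ 2 := by
  have hs : 0 ≤ σz ^ 2 * d / n := by positivity
  rw [stmt19_general (by omega) σz hU ⟨by fun_prop, hlaw⟩ hWstar]
  calc (1 + σz ^ 2) * (σz ^ 2 * d / n / (1 + σz ^ 2 * d / n))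
      ≤ 2 * (σz ^ 2 * d / n) := one_add_mul_div_one_add_le hσz1 hs
    _ ≤ 24 * (σz ^ 2 * d / n) := by gcongr; norm_num
    _ = 24 * ((d : ℝ) / (n : ℝ)) * σz ^ 2 := by ring
end
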